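/- There is a ∗-algebra isomorphism ψ: U_q(su_{1,1})⋉O(U_q) → O(U_q)⋊U_q(su_{1,1}) determined on generators by ψ(z) = z, ψ(K) = K⁻¹, ψ(E) = −F (hence ψ(z̄) = z̄, ψ(K⁻¹) = K, ψ(F) = −E). -/

import Mathlib

/-- The defining relations of the cross product ∗-algebra `U_q(su_{1,1}) ⋉ O(U_q)` on
elements `z, E, F, K, K'` (`K'` playing the role of `K⁻¹`, `star z` that of `z̄`) of a
∗-algebra over ℂ, including the involution conditions `K* = K`, `K'* = K'`, `E* = -F`. -/
def UqLeftRel {A : Type} [Ring A] [Algebra ℂ A] [StarRing A]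
    (q : ℝ) (z E F K K' : A) : Prop :=
  star K = K ∧ star K' = K' ∧ star E = -F ∧
  star z * z - (q : ℂ) ^ 2 • (z * star z) = (1 - (q : ℂ) ^ 2) • (1 : A) ∧
  K * K' = 1 ∧ K' * K = 1 ∧
  K * E = (q : ℂ) • (E * K) ∧ K * F = (q : ℂ)⁻¹ • (F * K) ∧
  E * F - F * E = ((q : ℂ) - (q : ℂ)⁻¹)⁻¹ • (K * K - K' * K') ∧
  z * K = (q : ℂ)⁻¹ • (K * z) ∧
  z * E = (q : ℂ)⁻¹ • (E * z) - (Real.sqrt q : ℂ) • (K' * (z * z)) ∧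
  z * F = (q : ℂ)⁻¹ • (F * z) + (Real.sqrt q : ℂ)⁻¹ • K' ∧
  star z * K = (q : ℂ) • (K * star z) ∧
  star z * E = (q : ℂ) • (E * star z) + (Real.sqrt q : ℂ) • K' ∧
  star z * F = (q : ℂ) • (F * star z)
    - (Real.sqrt q : ℂ)⁻¹ • (K' * (star z * star z))

/-- The defining relations of the right cross product ∗-algebra `O(U_q) ⋊ U_q(su_{1,1})`. -/
def UqRightRel {B : Type} [Ring B] [Algebra ℂ B] [StarRing B]
    (q : ℝ) (z E F K K' : B) : Prop :=
  star K = K ∧ star K' = K' ∧ star E = -F ∧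
  star z * z - (q : ℂ) ^ 2 • (z * star z) = (1 - (q : ℂ) ^ 2) • (1 : B) ∧
  K * K' = 1 ∧ K' * K = 1 ∧
  K * E = (q : ℂ) • (E * K) ∧ K * F = (q : ℂ)⁻¹ • (F * K) ∧
  E * F - F * E = ((q : ℂ) - (q : ℂ)⁻¹)⁻¹ • (K * K - K' * K') ∧
  K * z = (q : ℂ)⁻¹ • (z * K) ∧
  E * z = (q : ℂ) • (z * E) + (Real.sqrt q : ℂ) • K ∧
  F * z = (q : ℂ) • (z * F) - (Real.sqrt q : ℂ)⁻¹ • (z * z * K) ∧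
  K * star z = (q : ℂ) • (star z * K) ∧
  E * star z = (q : ℂ)⁻¹ • (star z * E)
    - (Real.sqrt q : ℂ) • (star z * star z * K) ∧
  F * star z = (q : ℂ)⁻¹ • (star z * F) + (Real.sqrt q : ℂ)⁻¹ • K

/-- `A` together with the elements `z, E, F, K, K'` is the universal unital ℂ-∗-algebra
on these generators subject to the relations of `U_q(su_{1,1}) ⋉ O(U_q)`. -/
def IsUniversalUqLeft (q : ℝ) (A : Type) [Ring A] [Algebra ℂ A] [StarRing A]
    [StarModule ℂ A] (z E F K K' : A) : Prop :=
  UqLeftRel q z E F K K' ∧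
  ∀ (B : Type) [Ring B] [Algebra ℂ B] [StarRing B] [StarModule ℂ B],
    ∀ z' E' F' L L' : B, UqLeftRel q z' E' F' L L' →
      ∃! φ : A →⋆ₐ[ℂ] B, φ z = z' ∧ φ E = E' ∧ φ F = F' ∧ φ K = L ∧ φ K' = L'

/-- `B` together with `z, E, F, K, K'` is the universal unital ℂ-∗-algebra subject to the
relations of `O(U_q) ⋊ U_q(su_{1,1})`. -/
def IsUniversalUqRight (q : ℝ) (B : Type) [Ring B] [Algebra ℂ B] [StarRing B]
    [StarModule ℂ B] (z E F K K' : B) : Prop :=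
  UqRightRel q z E F K K' ∧
  ∀ (C : Type) [Ring C] [Algebra ℂ C] [StarRing C] [StarModule ℂ C],
    ∀ z' E' F' L L' : C, UqRightRel q z' E' F' L L' →
      ∃! φ : B →⋆ₐ[ℂ] C, φ z = z' ∧ φ E = E' ∧ φ F = F' ∧ φ K = L ∧ φ K' = L'

/-!
Put `s = √q` for `z` and `s = 1/√q` for `z̄`. In terms of `s`, the cross relations of `z̄` are those
of `z` with `E` and `F` exchanged, so both generators obey one family of cross relations. A left
cross relation, solved for the product in the opposite order, is a right cross relation for
`(-F, -E, K⁻¹)` in place of `(E, F, K)`: solving multiplies the inhomogeneous term by `s²`, which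
turns `s⁻¹ K⁻¹` into `s K⁻¹`, and turns `s K⁻¹ w²` into `s⁻¹ w² K⁻¹` because `K⁻¹ w² = s⁻⁴ w² K⁻¹`.
As `(E, F, K) ↦ (-F, -E, K⁻¹)` also preserves the relations of `U_q(su_{1,1})`, the two cross
product algebras have the same universal property.
-/

section Algebra

variable {k A : Type*} [Field k] [Ring A] [Algebra k A]

/-- `q`-commutation: `a` and `b` commute up to the scalar `c`, in the order `a b = c b a`. It is how
`K` and `K⁻¹` interact with the other generators. -/
def QCommute (c : k) (a b : A) : Prop :=
  a * b = c • (b * a)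

namespace QCommute

variable {c d : k} {a a' b x y : A}

theorem symm (hc : c ≠ 0) (h : QCommute c a b) : QCommute c⁻¹ b a :=
  (eq_inv_smul_iff₀ hc).2 (Eq.symm h)

theorem neg_right (h : QCommute c a b) : QCommute c a (-b) := by
  unfold QCommute at *
  rw [mul_neg, h, neg_mul, smul_neg]

theorem mul_right (hx : QCommute c a x) (hy : QCommute d a y) : QCommute (c * d) a (x * y) := by
  unfold QCommute at *
  rw [← mul_assoc, hx, smul_mul_assoc, mul_assoc, hy, mul_smul_comm, smul_smul, mul_assoc]

theorem iff_swap_inv (haa' : a * a' = 1) (ha'a : a' * a = 1) :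
    QCommute c a b ↔ QCommute c b a' := by
  constructor
  · intro (h : a * b = c • (b * a))
    calc b * a' = a' * (a * b) * a' := by rw [← mul_assoc a', ha'a, one_mul]
      _ = c • (a' * b * (a * a')) := by
        rw [h, mul_smul_comm, smul_mul_assoc, ← mul_assoc, mul_assoc]
      _ = c • (a' * b) := by rw [haa', mul_one]
  · intro (h : b * a' = c • (a' * b))
    calc a * b = a * (b * a') * a := by rw [mul_assoc, mul_assoc b, ha'a, mul_one]
      _ = c • (a * a' * b * a) := by rw [h, mul_smul_comm, smul_mul_assoc, ← mul_assoc]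
      _ = c • (b * a) := by rw [haa', one_mul]

theorem inv_left (haa' : a * a' = 1) (ha'a : a' * a = 1) (hc : c ≠ 0) (h : QCommute c a b) :
    QCommute c⁻¹ a' b :=
  ((iff_swap_inv haa' ha'a).1 h).symm hc

end QCommute

/-- The relations of `U_q(su_{1,1})`, with `K'` playing the role of `K⁻¹`, including the
involution. -/
structure UqSuRel [StarRing A] (q : k) (E F K K' : A) : Prop where
  star_K : star K = K
  star_K' : star K' = K'
  star_E : star E = -F
  K_mul_K' : K * K' = 1
  K'_mul_K : K' * K = 1
  K_E : QCommute q K E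
  K_F : QCommute q⁻¹ K F
  commutator : E * F - F * E = (q - q⁻¹)⁻¹ • (K * K - K' * K')

/-- The cross relations of `U_q(su_{1,1}) ⋉ O(U_q)` between a generator `w` of `O(U_q)` and
`X, Y, K, K' = K⁻¹`. Those of `z` are the case `s = √q`, `(X, Y) = (E, F)`, those of `z̄` the case
`s = 1/√q`, `(X, Y) = (F, E)`. -/
def LeftCrossRel (s : k) (w X Y K K' : A) : Prop :=
  QCommute (s ^ 2)⁻¹ w K ∧
  w * Y = (s ^ 2)⁻¹ • (Y * w) + s⁻¹ • K' ∧
  w * X = (s ^ 2)⁻¹ • (X * w) - s • (K' * (w * w))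

/-- The cross relations of `O(U_q) ⋊ U_q(su_{1,1})` between a generator `w` of `O(U_q)` and
`X, Y, K`, with the same two cases as in `LeftCrossRel`. -/
def RightCrossRel (s : k) (w X Y K : A) : Prop :=
  QCommute (s ^ 2)⁻¹ K w ∧
  X * w = s ^ 2 • (w * X) + s • K ∧
  Y * w = s ^ 2 • (w * Y) - s⁻¹ • (w * w * K)

theorem UqSuRel.neg_swap [StarRing A] {q : k} {E F K K' : A} (hq : q ≠ 0)
    (h : UqSuRel q E F K K') : UqSuRel q (-F) (-E) K' K where
  star_K := h.star_K'
  star_K' := h.star_K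
  star_E := by rw [← h.star_E, star_star, neg_neg]
  K_mul_K' := h.K'_mul_K
  K'_mul_K := h.K_mul_K'
  K_E := by simpa only [inv_inv] using
    (h.K_F.inv_left h.K_mul_K' h.K'_mul_K (inv_ne_zero hq)).neg_right
  K_F := (h.K_E.inv_left h.K_mul_K' h.K'_mul_K hq).neg_right
  commutator := by rw [neg_mul_neg, neg_mul_neg, ← neg_sub, h.commutator, ← smul_neg, neg_sub]

theorem uqSuRel_neg_swap_iff [StarRing A] {q : k} {E F K K' : A} (hq : q ≠ 0) :
    UqSuRel q (-F) (-E) K' K ↔ UqSuRel q E F K K' :=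
  ⟨fun h => by simpa only [neg_neg] using h.neg_swap hq, UqSuRel.neg_swap hq⟩

theorem mul_eq_inv_smul_add_iff {c : k} (hc : c ≠ 0) {w x u : A} :
    w * x = c⁻¹ • (x * w) + u ↔ -x * w = c • (w * -x) + c • u := by
  rw [← sub_eq_iff_eq_add, eq_inv_smul_iff₀ hc, smul_sub, sub_eq_iff_eq_add, neg_mul, mul_neg,
    smul_neg, neg_eq_iff_eq_neg, neg_add, neg_neg, ← sub_eq_add_neg, eq_sub_iff_add_eq, eq_comm]

theorem leftCrossRel_iff_rightCrossRel {s : k} (hs : s ≠ 0) {w X Y K K' : A}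
    (hKK' : K * K' = 1) (hK'K : K' * K = 1) :
    LeftCrossRel s w X Y K K' ↔ RightCrossRel s w (-Y) (-X) K' := by
  have hs2 : s ^ 2 ≠ 0 := pow_ne_zero 2 hs
  rw [LeftCrossRel, RightCrossRel, ← QCommute.iff_swap_inv hK'K hKK']
  refine and_congr_right fun hw => and_congr ?_ ?_
  · have coefficient : s ^ 2 * s⁻¹ = s := by field_simp
    rw [mul_eq_inv_smul_add_iff hs2, smul_smul, coefficient]
  · have coefficient : s ^ 2 * s * ((s ^ 2)⁻¹ * (s ^ 2)⁻¹) = s⁻¹ := by field_simp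
    have K'_mul_sq : K' * (w * w) = ((s ^ 2)⁻¹ * (s ^ 2)⁻¹) • (w * w * K') := hw.mul_right hw
    rw [sub_eq_add_neg, mul_eq_inv_smul_add_iff hs2, smul_neg, ← sub_eq_add_neg, smul_smul,
      K'_mul_sq, smul_smul, coefficient]

end Algebra

section Relations

variable {A : Type} [Ring A] [Algebra ℂ A] [StarRing A] {q : ℝ} {z E F K K' : A}

theorem ofReal_sqrt_sq (hq : 0 ≤ q) : (√q : ℂ) ^ 2 = q := by
  rw [← Complex.ofReal_pow, Real.sq_sqrt hq]

theorem uqLeftRel_iff (hq : 0 ≤ q) :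
    UqLeftRel q z E F K K' ↔
      UqSuRel (q : ℂ) E F K K' ∧
      star z * z - (q : ℂ) ^ 2 • (z * star z) = (1 - (q : ℂ) ^ 2) • (1 : A) ∧
      LeftCrossRel (√q : ℂ) z E F K K' ∧ LeftCrossRel (√q : ℂ)⁻¹ (star z) F E K K' := by
  simp only [UqLeftRel, LeftCrossRel, QCommute, inv_pow, inv_inv, ofReal_sqrt_sq hq]
  constructor
  · rintro ⟨hK, hK', hE, hz, hKK', hK'K, hKE, hKF, hEF, hcross⟩
    exact ⟨⟨hK, hK', hE, hKK', hK'K, hKE, hKF, hEF⟩, hz, by tauto⟩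
  · rintro ⟨⟨hK, hK', hE, hKK', hK'K, hKE, hKF, hEF⟩, hz, hcross⟩
    exact ⟨hK, hK', hE, hz, hKK', hK'K, hKE, hKF, hEF, by tauto⟩

theorem uqRightRel_iff (hq : 0 ≤ q) :
    UqRightRel q z E F K K' ↔
      UqSuRel (q : ℂ) E F K K' ∧
      star z * z - (q : ℂ) ^ 2 • (z * star z) = (1 - (q : ℂ) ^ 2) • (1 : A) ∧
      RightCrossRel (√q : ℂ) z E F K ∧ RightCrossRel (√q : ℂ)⁻¹ (star z) F E K := by
  simp only [UqRightRel, RightCrossRel, QCommute, inv_pow, inv_inv, ofReal_sqrt_sq hq]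
  constructor
  · rintro ⟨hK, hK', hE, hz, hKK', hK'K, hKE, hKF, hEF, hcross⟩
    exact ⟨⟨hK, hK', hE, hKK', hK'K, hKE, hKF, hEF⟩, hz, by tauto⟩
  · rintro ⟨⟨hK, hK', hE, hKK', hK'K, hKE, hKF, hEF⟩, hz, hcross⟩
    exact ⟨hK, hK', hE, hz, hKK', hK'K, hKE, hKF, hEF, by tauto⟩

theorem uqLeftRel_iff_uqRightRel (hq : 0 < q) :
    UqLeftRel q z E F K K' ↔ UqRightRel q z (-F) (-E) K' K := by
  have hqC : (q : ℂ) ≠ 0 := Complex.ofReal_ne_zero.2 hq.ne'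
  have hs : (√q : ℂ) ≠ 0 := Complex.ofReal_ne_zero.2 (Real.sqrt_pos.2 hq).ne'
  rw [uqLeftRel_iff hq.le, uqRightRel_iff hq.le, uqSuRel_neg_swap_iff hqC]
  refine and_congr_right fun hU => and_congr_right fun _ => and_congr ?_ ?_
  · exact leftCrossRel_iff_rightCrossRel hs hU.K_mul_K' hU.K'_mul_K
  · exact leftCrossRel_iff_rightCrossRel (inv_ne_zero hs) hU.K_mul_K' hU.K'_mul_K

end Relations

section Universal

variable {A : Type} [Ring A] [Algebra ℂ A] [StarRing A] [StarModule ℂ A]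
  {B : Type} [Ring B] [Algebra ℂ B] [StarRing B] [StarModule ℂ B]
  {q : ℝ} {z E F K K' : A} {z' E' F' L L' : B}

theorem IsUniversalUqLeft.isUniversalUqRight (hq : 0 < q) (h : IsUniversalUqLeft q A z E F K K') :
    IsUniversalUqRight q A z (-F) (-E) K' K := by
  refine ⟨(uqLeftRel_iff_uqRightRel hq).1 h.1, fun C _ _ _ _ w X Y M M' hC => ?_⟩
  have hC' : UqLeftRel q w (-Y) (-X) M' M :=
    (uqLeftRel_iff_uqRightRel hq).2 (by simpa only [neg_neg] using hC)
  refine (existsUnique_congr fun φ => ?_).1 (h.2 C _ _ _ _ _ hC')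
  simp only [map_neg, neg_eq_iff_eq_neg]
  tauto

theorem IsUniversalUqRight.exists_starAlgEquiv (hA : IsUniversalUqRight q A z E F K K')
    (hB : IsUniversalUqRight q B z' E' F' L L') :
    ∃ ψ : A ≃⋆ₐ[ℂ] B, ψ z = z' ∧ ψ E = E' ∧ ψ F = F' ∧ ψ K = L ∧ ψ K' = L' := by
  obtain ⟨φ, hφ, -⟩ := hA.2 B _ _ _ _ _ hB.1
  obtain ⟨χ, hχ, -⟩ := hB.2 A _ _ _ _ _ hA.1
  have χ_comp_φ : χ.comp φ = StarAlgHom.id ℂ A :=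
    (hA.2 A _ _ _ _ _ hA.1).unique (by simp [hφ, hχ]) (by simp)
  have φ_comp_χ : φ.comp χ = StarAlgHom.id ℂ B :=
    (hB.2 B _ _ _ _ _ hB.1).unique (by simp [hφ, hχ]) (by simp)
  exact ⟨StarAlgEquiv.ofStarAlgHom φ χ χ_comp_φ φ_comp_χ, hφ⟩

end Universal

theorem stmt_13_general (q : ℝ) (hq0 : 0 < q) (hq1 : q ≠ 1)
    (A : Type) [Ring A] [Algebra ℂ A] [StarRing A] [StarModule ℂ A]
    (B : Type) [Ring B] [Algebra ℂ B] [StarRing B] [StarModule ℂ B]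
    (z E F K K' : A) (z' E' F' L L' : B)
    (hA : IsUniversalUqLeft q A z E F K K')
    (hB : IsUniversalUqRight q B z' E' F' L L') :
    ∃ ψ : A ≃⋆ₐ[ℂ] B,
      ψ z = z' ∧ ψ K = L' ∧ ψ E = -F' ∧
      ψ (star z) = star z' ∧ ψ K' = L ∧ ψ F = -E' ∧
      ψ.symm z' = z ∧ ψ.symm L = K' ∧ ψ.symm E' = -F ∧
      ψ.symm (star z') = star z ∧ ψ.symm L' = K ∧ ψ.symm F' = -E := by
  obtain ⟨ψ, hz, hF, hE, hK', hK⟩ := (hA.isUniversalUqRight hq0).exists_starAlgEquiv hB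
  rw [map_neg, neg_eq_iff_eq_neg] at hF hE
  have hzbar : ψ (star z) = star z' := by rw [map_star, hz]
  refine ⟨ψ, hz, hK, hE, hzbar, hK', hF, ?_⟩
  simp [StarAlgEquiv.symm_apply_eq, hz, hE, hF, hK, hK', hzbar]

/-- There is a ∗-algebra isomorphism
`ψ : U_q(su_{1,1}) ⋉ O(U_q) → O(U_q) ⋊ U_q(su_{1,1})` with `ψ(z) = z`, `ψ(K) = K⁻¹`,
`ψ(E) = -F` (hence `ψ(z̄) = z̄`, `ψ(K⁻¹) = K`, `ψ(F) = -E`). -/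
theorem stmt_13 (q : ℝ) (hq0 : 0 < q) (hq1 : q < 1)
    (A : Type) [Ring A] [Algebra ℂ A] [StarRing A] [StarModule ℂ A]
    (B : Type) [Ring B] [Algebra ℂ B] [StarRing B] [StarModule ℂ B]
    (z E F K K' : A) (z' E' F' L L' : B)
    (hA : IsUniversalUqLeft q A z E F K K')
    (hB : IsUniversalUqRight q B z' E' F' L L') :
    ∃ ψ : A ≃⋆ₐ[ℂ] B,
      ψ z = z' ∧ ψ K = L' ∧ ψ E = -F' ∧
      ψ (star z) = star z' ∧ ψ K' = L ∧ ψ F = -E' ∧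
      ψ.symm z' = z ∧ ψ.symm L = K' ∧ ψ.symm E' = -F ∧
      ψ.symm (star z') = star z ∧ ψ.symm L' = K ∧ ψ.symm F' = -E :=
  stmt_13_general q hq0 hq1.ne A B z E F K K' z' E' F' L L' hA hB
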